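/- arXiv:2010.01275 — 6 statements merged into one kernel-verified Lean document; each statement's English description precedes it below -/
import Mathlib

section
/- Let s, y ∈ ℝⁿ with y ≠ 0, let H be a symmetric positive definite n×n real matrix, and let β > 0 with sᵀy + 1/β ≠ 0 and sᵀy + 2/β ≠ 0. Set γ = 1/(sᵀy + 1/β), ω = 1/(sᵀy + 2/β), and H₊ = (I − ω s yᵀ) H (I − ω y sᵀ) + ω[γ/ω + (γ − ω)(yᵀ H y)] s sᵀ. Then H₊ is positive definite if and only if the SP-BFGS curvature condition sᵀy > −1/β holds. -/
open Matrix

/-- The quadratic form of a rank-one congruence of `H` plus a multiple of `s sᵀ`. -/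
lemma dotProduct_rankOne_congr_add_mulVec {n : ℕ} (s y x : Fin n → ℝ)
    (H : Matrix (Fin n) (Fin n) ℝ) (ω c : ℝ) :
    x ⬝ᵥ ((1 - ω • vecMulVec s y) * H * (1 - ω • vecMulVec y s) + c • vecMulVec s s) *ᵥ x =
      (x - (ω * (s ⬝ᵥ x)) • y) ⬝ᵥ H *ᵥ (x - (ω * (s ⬝ᵥ x)) • y) + c * (s ⬝ᵥ x) ^ 2 := by
  have hright : (1 - ω • vecMulVec y s) *ᵥ x = x - (ω * (s ⬝ᵥ x)) • y := by
    simp [sub_mulVec, smul_mulVec, vecMulVec_mulVec, smul_smul]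
  have hleft : x ᵥ* (1 - ω • vecMulVec s y) = x - (ω * (s ⬝ᵥ x)) • y := by
    simp [vecMul_sub, vecMul_smul, vecMul_vecMulVec, smul_smul, dotProduct_comm x s]
  rw [add_mulVec, dotProduct_add, ← mulVec_mulVec, ← mulVec_mulVec, hright, dotProduct_mulVec,
    hleft, smul_mulVec, vecMulVec_mulVec]
  rw [dotProduct_smul, op_smul_eq_smul, dotProduct_smul, dotProduct_comm x s]
  simp only [smul_eq_mul]
  ring

/-- **Positive definiteness of the SP-BFGS update.**
For symmetric positive definite `H` and `y ≠ 0`, the SP-BFGS update `Hplus` is positive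
definite if and only if the SP-BFGS curvature condition `sᵀy > −1/β` holds. -/
theorem spbfgs_posdef_iff
    {n : ℕ} (s y : Fin n → ℝ) (hy : y ≠ 0)
    (H : Matrix (Fin n) (Fin n) ℝ) (hH : H.PosDef)
    (β : ℝ) (hβ : 0 < β)
    (h1 : s ⬝ᵥ y + 1 / β ≠ 0) (h2 : s ⬝ᵥ y + 2 / β ≠ 0)
    (γ ω : ℝ) (hγ : γ = 1 / (s ⬝ᵥ y + 1 / β)) (hω : ω = 1 / (s ⬝ᵥ y + 2 / β))
    (Hplus : Matrix (Fin n) (Fin n) ℝ)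
    (hHplus : Hplus =
      (1 - ω • vecMulVec s y) * H * (1 - ω • vecMulVec y s) +
        (ω * (γ / ω + (γ - ω) * (y ⬝ᵥ H *ᵥ y))) • vecMulVec s s) :
    Hplus.PosDef ↔ -(1 / β) < s ⬝ᵥ y := by
  have hpos : ∀ x : Fin n → ℝ, x ≠ 0 → 0 < x ⬝ᵥ H *ᵥ x := fun x hx => by
    simpa using hH.dotProduct_mulVec_pos hx
  have hnonneg : ∀ x : Fin n → ℝ, 0 ≤ x ⬝ᵥ H *ᵥ x := fun x => by
    simpa using hH.posSemidef.dotProduct_mulVec_nonneg x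
  have hY := hpos y hy
  have ht : 0 < 1 / β := by positivity
  have h2t : 2 / β = 2 * (1 / β) := by ring
  rw [h2t] at h2 hω
  generalize 1 / β = t at *
  have hω0 : ω ≠ 0 := hω ▸ one_div_ne_zero h2
  have hγ' : γ * (s ⬝ᵥ y + t) = 1 := by rw [hγ, one_div_mul_cancel h1]
  have hω' : ω * (s ⬝ᵥ y + 2 * t) = 1 := by rw [hω, one_div_mul_cancel h2]
  have hc : ω * (γ / ω + (γ - ω) * (y ⬝ᵥ H *ᵥ y)) =
      γ * (1 + t * ω ^ 2 * (y ⬝ᵥ H *ᵥ y)) := by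
    have hdiff : γ - ω = t * γ * ω := by
      linear_combination ω * hγ' - γ * hω'
    rw [hdiff]; field_simp
  rw [hc] at hHplus
  constructor
  · intro hP
    have hq : 0 < y ⬝ᵥ Hplus *ᵥ y := by simpa using hP.dotProduct_mulVec_pos hy
    have hval : y ⬝ᵥ Hplus *ᵥ y = γ * ((s ⬝ᵥ y) ^ 2 + t * (y ⬝ᵥ H *ᵥ y)) := by
      have hsub : y - (ω * (s ⬝ᵥ y)) • y = (2 * t * ω) • y := by
        have hcoeff : 1 - ω * (s ⬝ᵥ y) = 2 * t * ω := by linear_combination -hω'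
        rw [← hcoeff, sub_smul, one_smul]
      rw [hHplus, dotProduct_rankOne_congr_add_mulVec, hsub, mulVec_smul, dotProduct_smul,
        smul_dotProduct, smul_eq_mul, smul_eq_mul]
      linear_combination (y ⬝ᵥ H *ᵥ y) *
        (γ * t * (ω * (s ⬝ᵥ y + 2 * t) + 1) * hω' - 4 * t ^ 2 * ω ^ 2 * hγ')
    rw [hval] at hq
    have hγpos : 0 < γ := pos_of_mul_pos_left hq (by positivity)
    rw [hγ, one_div_pos] at hγpos
    linarith
  · intro hlt
    have hγpos : 0 < γ := by
      rw [hγ, one_div_pos]; linarith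
    refine .of_dotProduct_mulVec_pos ?_ fun x hx => ?_
    · have hHt : Hᵀ = H := by simpa using hH.isHermitian.eq
      rw [hHplus, IsHermitian]
      simp [transpose_mul, hHt, transpose_vecMulVec, Matrix.mul_assoc]
    · rw [star_trivial, hHplus, dotProduct_rankOne_congr_add_mulVec]
      by_cases hsx : s ⬝ᵥ x = 0
      · simpa [hsx] using hpos x hx
      · have := hnonneg (x - (ω * (s ⬝ᵥ x)) • y)
        positivity
end

section
/- Let H be a symmetric positive definite n×n real matrix, let s, y ∈ ℝⁿ, let ω ∈ ℝ and d > 0, and set G = I − ω y sᵀ. Then the matrix Gᵀ H G + d s sᵀ is symmetric positive definite. -/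
open Matrix

/-- **Structural positive definiteness fact for SP-BFGS.**
If `H` is symmetric positive definite, `G = I − ω y sᵀ`, and `d > 0`, then
`Gᵀ H G + d s sᵀ` is symmetric positive definite. -/
theorem gthg_add_rank_one_posDef
    {n : ℕ} (H : Matrix (Fin n) (Fin n) ℝ) (hH : H.PosDef)
    (s y : Fin n → ℝ) (ω d : ℝ) (hd : 0 < d)
    (G : Matrix (Fin n) (Fin n) ℝ) (hG : G = 1 - ω • vecMulVec y s) :
    (Gᵀ * H * G + d • vecMulVec s s).PosDef := by
  have hGHG : (Gᵀ * H * G).PosSemidef := by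
    simpa using hH.posSemidef.conjTranspose_mul_mul_same G
  have hss : (d • vecMulVec s s).PosSemidef := by
    simpa using (posSemidef_vecMulVec_self_star s).smul hd.le
  refine .of_dotProduct_mulVec_pos (hGHG.add hss).isHermitian fun v hv => ?_
  have hrank : star v ⬝ᵥ (d • vecMulVec s s) *ᵥ v = d * (s ⬝ᵥ v) ^ 2 := by
    simp [smul_mulVec, vecMulVec_mulVec, dotProduct_comm v s, sq]
  rw [add_mulVec, dotProduct_add, hrank]
  by_cases hsv : s ⬝ᵥ v = 0
  · have hGv : G *ᵥ v = v := by
      simp [hG, sub_mulVec, smul_mulVec, vecMulVec_mulVec, hsv]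
    have hquad : star v ⬝ᵥ (Gᵀ * H * G) *ᵥ v = star v ⬝ᵥ H *ᵥ v := by
      rw [← mulVec_mulVec, ← mulVec_mulVec, hGv, dotProduct_mulVec, vecMul_transpose,
        star_trivial, hGv]
    rw [hquad, hsv]
    simpa using hH.dotProduct_mulVec_pos hv
  · exact add_pos_of_nonneg_of_pos (hGHG.dotProduct_mulVec_nonneg v) (by positivity)
end

section
/- Let s, y ∈ ℝⁿ, let H be a symmetric n×n real matrix, and let β > 0 with sᵀy + 1/β ≠ 0 and sᵀy + 2/β ≠ 0. Set γ = 1/(sᵀy + 1/β), ω = 1/(sᵀy + 2/β), and H₊ = (I − ω s yᵀ) H (I − ω y sᵀ) + ω[γ/ω + (γ − ω)(yᵀ H y)] s sᵀ. Then yᵀ H₊ y = (β (yᵀs)² + yᵀ H y)/(1 + β yᵀs); equivalently, yᵀ H₊ y = (β yᵀs/(1 + β yᵀs))·(yᵀs) + (1/(1 + β yᵀs))·(yᵀ H y), so yᵀ H₊ y is an affine combination of yᵀs and yᵀ H y with weights summing to one. -/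
open Matrix

/-- **The SP-BFGS update interpolates the curvature along `y`.**
`yᵀ H₊ y = (β (yᵀs)² + yᵀ H y)/(1 + β yᵀs)`, an affine combination of `yᵀs` and
`yᵀ H y` with weights summing to one. -/
theorem spbfgs_curvature_convex_combination
    {n : ℕ} (s y : Fin n → ℝ)
    (H : Matrix (Fin n) (Fin n) ℝ) (hH : Hᵀ = H)
    (β : ℝ) (hβ : 0 < β)
    (h1 : s ⬝ᵥ y + 1 / β ≠ 0) (h2 : s ⬝ᵥ y + 2 / β ≠ 0)
    (γ ω : ℝ) (hγ : γ = 1 / (s ⬝ᵥ y + 1 / β)) (hω : ω = 1 / (s ⬝ᵥ y + 2 / β))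
    (Hplus : Matrix (Fin n) (Fin n) ℝ)
    (hHplus : Hplus =
      (1 - ω • vecMulVec s y) * H * (1 - ω • vecMulVec y s) +
        (ω * (γ / ω + (γ - ω) * (y ⬝ᵥ H *ᵥ y))) • vecMulVec s s) :
    y ⬝ᵥ Hplus *ᵥ y = (β * (y ⬝ᵥ s) ^ 2 + y ⬝ᵥ H *ᵥ y) / (1 + β * (y ⬝ᵥ s)) ∧
      y ⬝ᵥ Hplus *ᵥ y =
        (β * (y ⬝ᵥ s) / (1 + β * (y ⬝ᵥ s))) * (y ⬝ᵥ s) +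
          (1 / (1 + β * (y ⬝ᵥ s))) * (y ⬝ᵥ H *ᵥ y) ∧
      (β * (y ⬝ᵥ s) / (1 + β * (y ⬝ᵥ s))) + 1 / (1 + β * (y ⬝ᵥ s)) = 1 := by
  have hβ0 : β ≠ 0 := hβ.ne'
  have hsy : s ⬝ᵥ y = y ⬝ᵥ s := dotProduct_comm s y
  have hright : (1 - ω • vecMulVec y s) *ᵥ y = (1 - ω * (y ⬝ᵥ s)) • y := by
    rw [sub_mulVec, one_mulVec, smul_mulVec, vecMulVec_mulVec, hsy, op_smul_eq_smul, smul_smul,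
      sub_smul, one_smul]
  have hleft : y ᵥ* (1 - ω • vecMulVec s y) = (1 - ω * (y ⬝ᵥ s)) • y := by
    rw [vecMul_sub, vecMul_one, vecMul_smul, vecMul_vecMulVec, smul_smul, sub_smul, one_smul]
  have hquad : y ⬝ᵥ Hplus *ᵥ y = (1 - ω * (y ⬝ᵥ s)) ^ 2 * (y ⬝ᵥ H *ᵥ y) +
      ω * (γ / ω + (γ - ω) * (y ⬝ᵥ H *ᵥ y)) * (y ⬝ᵥ s) ^ 2 := by
    rw [hHplus, add_mulVec, dotProduct_add, ← mulVec_mulVec, ← mulVec_mulVec, hright,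
      dotProduct_mulVec, hleft, mulVec_smul, smul_dotProduct, dotProduct_smul, smul_mulVec,
      vecMulVec_mulVec, hsy, op_smul_eq_smul, dotProduct_smul, dotProduct_smul]
    simp only [smul_eq_mul]
    ring
  rw [hsy] at h1 h2 hγ hω
  generalize y ⬝ᵥ s = a at *
  generalize y ⬝ᵥ H *ᵥ y = h at *
  have hden1 : 1 + β * a ≠ 0 := by
    intro h0
    apply h1
    field_simp
    linarith
  have hden2 : 2 + β * a ≠ 0 := by
    intro h0
    apply h2
    field_simp
    linarith
  have hγ' : γ = β / (1 + β * a) := by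
    rw [hγ, div_eq_div_iff h1 hden1]
    field_simp
    ring
  have hω' : ω = β / (2 + β * a) := by
    rw [hω, div_eq_div_iff h2 hden2]
    field_simp
    ring
  have hmain : y ⬝ᵥ Hplus *ᵥ y = (β * a ^ 2 + h) / (1 + β * a) := by
    rw [hquad, hγ', hω']
    field_simp
    ring
  refine ⟨hmain, ?_, ?_⟩
  · rw [hmain]
    ring
  · field_simp
    ring
end

section
/- Let s, y ∈ ℝⁿ with sᵀy ≠ 0, let H be a symmetric n×n real matrix, and for β > 0 (sufficiently large that sᵀy + 1/β ≠ 0 and sᵀy + 2/β ≠ 0) let H₊(β) denote the SP-BFGS update of H with data (s, y, β). Then as β → +∞, H₊(β) converges (entrywise) to the BFGS update (I − ρ s yᵀ) H (I − ρ y sᵀ) + ρ s sᵀ, where ρ = 1/(sᵀy). -/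
open Matrix Filter

/-- The SP-BFGS update of `H` with data `(s, y, β)`:
`H₊(β) = (I − ω s yᵀ) H (I − ω y sᵀ) + ω[γ/ω + (γ − ω)(yᵀ H y)] s sᵀ`,
where `γ = 1/(sᵀy + 1/β)` and `ω = 1/(sᵀy + 2/β)`. -/
noncomputable def spbfgsUpdate {n : ℕ} (H : Matrix (Fin n) (Fin n) ℝ) (s y : Fin n → ℝ)
    (β : ℝ) : Matrix (Fin n) (Fin n) ℝ :=
  (1 - (1 / (s ⬝ᵥ y + 2 / β)) • vecMulVec s y) * H *
      (1 - (1 / (s ⬝ᵥ y + 2 / β)) • vecMulVec y s) +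
    ((1 / (s ⬝ᵥ y + 2 / β)) *
        ((1 / (s ⬝ᵥ y + 1 / β)) / (1 / (s ⬝ᵥ y + 2 / β)) +
          ((1 / (s ⬝ᵥ y + 1 / β)) - (1 / (s ⬝ᵥ y + 2 / β))) * (y ⬝ᵥ H *ᵥ y))) •
      vecMulVec s s

/-- `1 / (a + c / β) → 1 / a` as `β → +∞`, provided `a ≠ 0`. -/
theorem tendsto_one_div_add_div_atTop {a : ℝ} (ha : a ≠ 0) (c : ℝ) :
    Tendsto (fun β : ℝ => 1 / (a + c / β)) atTop (nhds (1 / a)) := by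
  have h : Tendsto (fun β : ℝ => a + c / β) atTop (nhds a) := by
    simpa using tendsto_const_nhds.add (tendsto_const_nhds.div_atTop (a := c) tendsto_id)
  exact tendsto_const_nhds.div h ha

/-- **As `β → +∞`, the SP-BFGS update converges (entrywise) to the BFGS update**
`(I − ρ s yᵀ) H (I − ρ y sᵀ) + ρ s sᵀ` with `ρ = 1/(sᵀy)`. -/
theorem spbfgs_tendsto_bfgs_atTop
    {n : ℕ} (s y : Fin n → ℝ) (hsy : s ⬝ᵥ y ≠ 0)
    (H : Matrix (Fin n) (Fin n) ℝ) (hH : Hᵀ = H) :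
    Tendsto (fun β : ℝ => spbfgsUpdate H s y β) atTop
      (nhds
        ((1 - (1 / (s ⬝ᵥ y)) • vecMulVec s y) * H * (1 - (1 / (s ⬝ᵥ y)) • vecMulVec y s) +
          (1 / (s ⬝ᵥ y)) • vecMulVec s s)) := by
  have hω := tendsto_one_div_add_div_atTop hsy 2
  have hγ := tendsto_one_div_add_div_atTop hsy 1
  have hcoef := hω.mul ((hγ.div hω (one_div_ne_zero hsy)).add
    ((hγ.sub hω).mul_const (y ⬝ᵥ H *ᵥ y)))
  rw [div_self (one_div_ne_zero hsy), sub_self, zero_mul, add_zero, mul_one] at hcoef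
  have hleft := (hω.smul_const (vecMulVec s y)).const_sub 1
  have hright := (hω.smul_const (vecMulVec y s)).const_sub 1
  exact ((hleft.mul_const H).mul hright).add (hcoef.smul_const (vecMulVec s s))
end

section
/- Let s, y ∈ ℝⁿ with s ≠ 0, let H be a symmetric positive definite n×n real matrix with B = H⁻¹, and let β > 0 satisfy sᵀy > −1/β. Set γ = 1/(sᵀy + 1/β), ω = 1/(sᵀy + 2/β), and let H₊ be the SP-BFGS update of H with data (s, y, β). Then the scalar Δ = ((ω − γ)(yᵀ B⁻¹ y) − γ/ω)(ω sᵀ B s) − (1 − ω yᵀs)² is nonzero, H₊ is invertible, and H₊⁻¹ = B − ω[((ω − γ)(yᵀ B⁻¹ y) − γ/ω) B s sᵀ B + (1 − ω sᵀy)(B s yᵀ + y sᵀ B) + ω (sᵀ B s) y yᵀ]/Δ. -/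
open Matrix

/-- A symmetric rank-two perturbation of an invertible matrix `H`, given in terms of `u = H y` and
`v = B s` with `B` the inverse of `H`, and its right inverse. -/
theorem rank_two_update_mul_inverse {ι K : Type*} [Fintype ι] [DecidableEq ι] [Field K]
    {H B : Matrix ι ι K} {s y u v : ι → K} {a b q ω τ δ Δ : K}
    (hHB : H * B = 1) (hHy : H *ᵥ y = u) (hHv : H *ᵥ v = s) (huB : u ᵥ* B = y) (hsB : s ᵥ* B = v)
    (hsv : s ⬝ᵥ v = a) (hsy : s ⬝ᵥ y = b) (huv : u ⬝ᵥ v = b) (huy : u ⬝ᵥ y = q)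
    (hδ : ω * δ = ω ^ 2 * q - τ) (hΔ : Δ = δ * (ω * a) - (1 - ω * b) ^ 2) (hΔ0 : Δ ≠ 0) :
    (H - ω • (vecMulVec s u + vecMulVec u s) + τ • vecMulVec s s) *
      (B - (ω / Δ) • (δ • vecMulVec v v + (1 - ω * b) • (vecMulVec v y + vecMulVec y v) +
        (ω * a) • vecMulVec y y)) = 1 := by
  obtain rfl : τ = ω ^ 2 * q - ω * δ := by rw [hδ]; ring
  simp only [add_mul, sub_mul, mul_add, mul_sub, smul_mul_assoc, mul_smul_comm, hHB,
    mul_vecMulVec, vecMulVec_mul, vecMulVec_mulVec, hHy, hHv, huB, hsB, hsv, hsy,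
    huv, huy, smul_vecMulVec, op_smul_eq_smul]
  ext i j
  simp only [Matrix.add_apply, Matrix.sub_apply, Matrix.smul_apply, vecMulVec_apply, smul_eq_mul]
  field_simp
  rw [hΔ]
  ring

/-- **SP-BFGS inverse update (Sherman–Morrison–Woodbury form).**
Under the SP-BFGS curvature condition, the scalar `Δ` is nonzero, `H₊` is invertible, and
`H₊⁻¹ = B − ω[ D̂ B s sᵀ B + (1 − ω sᵀy)(B s yᵀ + y sᵀ B) + ω (sᵀ B s) y yᵀ ]/Δ`
where `D̂ = (ω − γ)(yᵀ B⁻¹ y) − γ/ω` and `Δ = D̂ (ω sᵀ B s) − (1 − ω yᵀs)²`. -/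
theorem spbfgs_inverse_update
    {n : ℕ} (s y : Fin n → ℝ) (hs : s ≠ 0)
    (H : Matrix (Fin n) (Fin n) ℝ) (hH : H.PosDef)
    (B : Matrix (Fin n) (Fin n) ℝ) (hB : B = H⁻¹)
    (β : ℝ) (hβ : 0 < β) (hcurv : -(1 / β) < s ⬝ᵥ y)
    (γ ω : ℝ) (hγ : γ = 1 / (s ⬝ᵥ y + 1 / β)) (hω : ω = 1 / (s ⬝ᵥ y + 2 / β))
    (Hplus : Matrix (Fin n) (Fin n) ℝ)
    (hHplus : Hplus =
      (1 - ω • vecMulVec s y) * H * (1 - ω • vecMulVec y s) +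
        (ω * (γ / ω + (γ - ω) * (y ⬝ᵥ H *ᵥ y))) • vecMulVec s s)
    (Δ : ℝ)
    (hΔ : Δ = ((ω - γ) * (y ⬝ᵥ B⁻¹ *ᵥ y) - γ / ω) * (ω * (s ⬝ᵥ B *ᵥ s)) -
        (1 - ω * (y ⬝ᵥ s)) ^ 2) :
    Δ ≠ 0 ∧ IsUnit Hplus.det ∧
      Hplus⁻¹ = B - (ω / Δ) •
        (((ω - γ) * (y ⬝ᵥ B⁻¹ *ᵥ y) - γ / ω) • (B * vecMulVec s s * B) +
          (1 - ω * (s ⬝ᵥ y)) • (B * vecMulVec s y + vecMulVec y s * B) +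
          (ω * (s ⬝ᵥ B *ᵥ s)) • vecMulVec y y) := by
  subst hB
  have hdet : IsUnit H.det := hH.det_pos.ne'.isUnit
  have hHB : H * H⁻¹ = 1 := mul_nonsing_inv H hdet
  have hHT : Hᵀ = H := by simpa using hH.isHermitian.eq
  have hBT : H⁻¹ᵀ = H⁻¹ := by rw [transpose_nonsing_inv, hHT]
  have hyH : y ᵥ* H = H *ᵥ y := by rw [← mulVec_transpose, hHT]
  have hsB : s ᵥ* H⁻¹ = H⁻¹ *ᵥ s := by rw [← mulVec_transpose, hBT]
  have ha : 0 < s ⬝ᵥ H⁻¹ *ᵥ s := by simpa using hH.inv.dotProduct_mulVec_pos hs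
  have hq : 0 ≤ y ⬝ᵥ H *ᵥ y := by simpa using hH.posSemidef.dotProduct_mulVec_nonneg y
  have hβ' : 0 < 1 / β := one_div_pos.mpr hβ
  have h2 : 2 / β = 1 / β + 1 / β := by ring
  have hγ0 : 0 < γ := by rw [hγ]; exact one_div_pos.mpr (by linarith)
  have hω0 : 0 < ω := by rw [hω]; exact one_div_pos.mpr (by linarith)
  have hωγ : ω ≤ γ := by
    rw [hγ, hω]
    exact one_div_le_one_div_of_le (by linarith) (by linarith)
  rw [nonsing_inv_nonsing_inv H hdet] at hΔ ⊢
  rw [dotProduct_comm y s] at hΔ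
  have hΔ0 : Δ ≠ 0 := by
    have hδ : (ω - γ) * (y ⬝ᵥ H *ᵥ y) - γ / ω < 0 := by
      have := mul_nonneg (sub_nonneg.mpr hωγ) hq
      have := div_pos hγ0 hω0
      linarith
    have := mul_neg_of_neg_of_pos hδ (mul_pos hω0 ha)
    have := sq_nonneg (1 - ω * (s ⬝ᵥ y))
    exact ne_of_lt (by linarith)
  have hHplus' : Hplus = H - ω • (vecMulVec s (H *ᵥ y) + vecMulVec (H *ᵥ y) s) +
      (γ * (1 + ω * (y ⬝ᵥ H *ᵥ y))) • vecMulVec s s := by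
    rw [hHplus]
    simp only [sub_mul, mul_sub, one_mul, mul_one, smul_mul_assoc, mul_smul_comm,
      mul_vecMulVec, vecMulVec_mul, vecMulVec_mulVec, hyH, smul_vecMulVec,
      op_smul_eq_smul]
    rw [dotProduct_comm (H *ᵥ y) y]
    ext i j
    simp only [Matrix.add_apply, Matrix.sub_apply, Matrix.smul_apply, vecMulVec_apply, smul_eq_mul]
    field_simp
    ring
  have hmul := rank_two_update_mul_inverse (H := H) (B := H⁻¹) (s := s) (y := y)
    (τ := γ * (1 + ω * (y ⬝ᵥ H *ᵥ y))) (δ := (ω - γ) * (y ⬝ᵥ H *ᵥ y) - γ / ω)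
    hHB rfl (by rw [mulVec_mulVec, hHB, one_mulVec])
    (by rw [← hyH, vecMul_vecMul, hHB, vecMul_one]) hsB rfl rfl
    (by rw [← hyH, ← dotProduct_mulVec, mulVec_mulVec, hHB, one_mulVec, dotProduct_comm])
    (dotProduct_comm _ _) (by field_simp; ring) hΔ hΔ0
  rw [← hHplus'] at hmul
  refine ⟨hΔ0, isUnit_det_of_right_inverse hmul, ?_⟩
  rw [inv_eq_right_inv hmul, mul_vecMulVec, vecMulVec_mul, mul_vecMulVec, vecMulVec_mul, hsB]
end

section
/- Let s, y ∈ ℝⁿ, let H be a symmetric positive definite n×n real matrix, and let β > 0 satisfy sᵀy > −1/β. Set γ = 1/(sᵀy + 1/β), ω = 1/(sᵀy + 2/β), and let H₊ be the SP-BFGS update of H with data (s, y, β). Then every eigenvalue of H₊, and in particular its largest eigenvalue, is bounded above: λ_max(H₊) ≤ Tr(H₊) ≤ (1 + γ ‖y‖₂ ‖s‖₂)² Tr(H) + γ ‖s‖₂², where ‖·‖₂ denotes the Euclidean norm. -/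
open Matrix

open scoped MatrixOrder Matrix.Norms.L2Operator in
/-- The bilinear form of a positive semidefinite matrix is bounded by its trace. -/
theorem Matrix.PosSemidef.abs_dotProduct_mulVec_le {ι : Type*} [Fintype ι]
    {A : Matrix ι ι ℝ} (hA : A.PosSemidef) (x z : ι → ℝ) :
    |x ⬝ᵥ A *ᵥ z| ≤ A.trace * (√(x ⬝ᵥ x) * √(z ⬝ᵥ z)) := by
  classical
  obtain ⟨B, rfl⟩ := CStarAlgebra.nonneg_iff_eq_star_mul_self.mp hA.nonneg
  rw [star_eq_conjTranspose]
  have cauchy (u v : ι → ℝ) : |u ⬝ᵥ v| ≤ √(u ⬝ᵥ u) * √(v ⬝ᵥ v) := by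
    rw [← Real.sqrt_mul (by simpa using dotProduct_star_self_nonneg u)]
    apply Real.abs_le_sqrt
    simpa [dotProduct, sq] using Finset.sum_mul_sq_le_sq_mul_sq Finset.univ u v
  have hform : x ⬝ᵥ (Bᴴ * B) *ᵥ z = ∑ i, (B i ⬝ᵥ x) * (B i ⬝ᵥ z) := by
    rw [← mulVec_mulVec, dotProduct_mulVec, conjTranspose_eq_transpose_of_trivial,
      vecMul_transpose]
    rfl
  have htrace : (Bᴴ * B).trace = ∑ i, B i ⬝ᵥ B i := by
    rw [trace_mul_comm]
    simp [trace, mul_apply, dotProduct]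
  rw [hform, htrace, Finset.sum_mul]
  refine (Finset.abs_sum_le_sum_abs _ _).trans (Finset.sum_le_sum fun i _ => ?_)
  have hi : 0 ≤ B i ⬝ᵥ B i := by simpa using dotProduct_star_self_nonneg (B i)
  calc |B i ⬝ᵥ x * B i ⬝ᵥ z|
      ≤ (√(B i ⬝ᵥ B i) * √(x ⬝ᵥ x)) * (√(B i ⬝ᵥ B i) * √(z ⬝ᵥ z)) := by
        rw [abs_mul]
        gcongr <;> exact cauchy _ _
    _ = B i ⬝ᵥ B i * (√(x ⬝ᵥ x) * √(z ⬝ᵥ z)) := by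
        rw [mul_mul_mul_comm, Real.mul_self_sqrt hi]

/-- Every eigenvalue of a positive semidefinite matrix is at most its trace. -/
theorem Matrix.PosSemidef.le_trace_of_mem_spectrum {ι : Type*} [Fintype ι] [DecidableEq ι]
    {A : Matrix ι ι ℝ} (hA : A.PosSemidef) {μ : ℝ} (hμ : μ ∈ spectrum ℝ A) :
    μ ≤ A.trace := by
  rw [hA.isHermitian.spectrum_real_eq_range_eigenvalues] at hμ
  obtain ⟨i, rfl⟩ := hμ
  rw [hA.isHermitian.trace_eq_sum_eigenvalues]
  exact Finset.single_le_sum (f := hA.isHermitian.eigenvalues)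
    (fun j _ => hA.eigenvalues_nonneg j) (Finset.mem_univ i)

/-- **Eigenvalue upper bound for the SP-BFGS update.**
Every eigenvalue of `H₊` (in particular the largest) is bounded above:
`λ_max(H₊) ≤ Tr(H₊) ≤ (1 + γ‖y‖₂‖s‖₂)² Tr(H) + γ‖s‖₂²`. -/
theorem spbfgs_eigenvalue_upper_bound
    {n : ℕ} (s y : Fin n → ℝ)
    (H : Matrix (Fin n) (Fin n) ℝ) (hH : H.PosDef)
    (β : ℝ) (hβ : 0 < β) (hcurv : -(1 / β) < s ⬝ᵥ y)
    (γ ω : ℝ) (hγ : γ = 1 / (s ⬝ᵥ y + 1 / β)) (hω : ω = 1 / (s ⬝ᵥ y + 2 / β))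
    (Hplus : Matrix (Fin n) (Fin n) ℝ)
    (hHplus : Hplus =
      (1 - ω • vecMulVec s y) * H * (1 - ω • vecMulVec y s) +
        (ω * (γ / ω + (γ - ω) * (y ⬝ᵥ H *ᵥ y))) • vecMulVec s s) :
    (∀ μ ∈ spectrum ℝ Hplus, μ ≤ Matrix.trace Hplus) ∧
      Matrix.trace Hplus ≤
        (1 + γ * Real.sqrt (y ⬝ᵥ y) * Real.sqrt (s ⬝ᵥ s)) ^ 2 * Matrix.trace H +
          γ * Real.sqrt (s ⬝ᵥ s) ^ 2 := by
  have hβ' : 0 < 1 / β := by positivity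
  have h2 : 2 / β = 1 / β + 1 / β := by ring
  have hω0 : 0 < ω := by rw [hω]; apply one_div_pos.mpr; linarith
  have hωγ : ω ≤ γ := by
    rw [hω, hγ]; apply one_div_le_one_div_of_le <;> linarith
  have hγ0 : 0 < γ := hω0.trans_le hωγ
  have hHs : H.PosSemidef := hH.posSemidef
  have hq : 0 ≤ y ⬝ᵥ H *ᵥ y := by simpa using hHs.dotProduct_mulVec_nonneg y
  have hss : 0 ≤ s ⬝ᵥ s := by simpa using dotProduct_star_self_nonneg s
  have hyy : 0 ≤ y ⬝ᵥ y := by simpa using dotProduct_star_self_nonneg y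
  constructor
  · have hpsd : Hplus.PosSemidef := by
      rw [hHplus]
      have hadj : (1 - ω • vecMulVec y s) = (1 - ω • vecMulVec s y)ᴴ := by
        simp [conjTranspose_eq_transpose_of_trivial, transpose_vecMulVec]
      rw [hadj]
      refine (hHs.mul_mul_conjTranspose_same _).add (PosSemidef.smul ?_ ?_)
      · simpa using posSemidef_vecMulVec_self_star s
      · have : 0 ≤ γ - ω := sub_nonneg.mpr hωγ
        positivity
    exact fun μ hμ => hpsd.le_trace_of_mem_spectrum hμ
  · have hsym : s ⬝ᵥ H *ᵥ y = y ⬝ᵥ H *ᵥ s := by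
      have ht : Hᵀ = H := by
        rw [← conjTranspose_eq_transpose_of_trivial, hHs.isHermitian.eq]
      rw [dotProduct_comm, ← vecMul_transpose, ht, dotProduct_mulVec]
    have htr : Hplus.trace = H.trace - 2 * ω * (y ⬝ᵥ H *ᵥ s)
        + ω * γ * (y ⬝ᵥ H *ᵥ y) * (s ⬝ᵥ s) + γ * (s ⬝ᵥ s) := by
      have hcancel : ω * (γ / ω) = γ := mul_div_cancel₀ γ hω0.ne'
      rw [hHplus]
      simp only [sub_mul, mul_sub, one_mul, mul_one, smul_mul_assoc, mul_smul_comm,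
        trace_add, trace_sub, trace_smul, smul_eq_mul, vecMulVec_mul, mul_vecMulVec,
        vecMulVec_mulVec, trace_vecMulVec, smul_dotProduct, op_smul_eq_mul]
      rw [dotProduct_comm s (y ᵥ* H), dotProduct_comm (H *ᵥ y) s, ← dotProduct_mulVec,
        ← dotProduct_mulVec, hsym]
      linear_combination (s ⬝ᵥ s) * hcancel
    have hys := (abs_le.mp (hHs.abs_dotProduct_mulVec_le y s)).1
    have hyHy := (abs_le.mp (hHs.abs_dotProduct_mulVec_le y y)).2
    rw [Real.mul_self_sqrt hyy] at hyHy
    have hT : 0 ≤ H.trace := hHs.trace_nonneg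
    rw [htr]
    have e1 : -(ω * (y ⬝ᵥ H *ᵥ s)) ≤ γ * (H.trace * (√(y ⬝ᵥ y) * √(s ⬝ᵥ s))) := calc
      _ = ω * -(y ⬝ᵥ H *ᵥ s) := by ring
      _ ≤ ω * (H.trace * (√(y ⬝ᵥ y) * √(s ⬝ᵥ s))) := by gcongr; linarith
      _ ≤ _ := by gcongr
    have e2 : ω * γ * (y ⬝ᵥ H *ᵥ y) * (s ⬝ᵥ s)
        ≤ γ * γ * (H.trace * (y ⬝ᵥ y)) * (s ⬝ᵥ s) := by gcongr
    have e3 : (1 + γ * √(y ⬝ᵥ y) * √(s ⬝ᵥ s)) ^ 2 * H.trace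
        = H.trace + 2 * (γ * (H.trace * (√(y ⬝ᵥ y) * √(s ⬝ᵥ s))))
          + γ * γ * (H.trace * √(y ⬝ᵥ y) ^ 2) * √(s ⬝ᵥ s) ^ 2 := by ring
    rw [e3, Real.sq_sqrt hyy, Real.sq_sqrt hss]
    linarith
end
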